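/- For a vector of indeterminates x = (x_1,...,x_k), an indeterminate λ, and positive integers n, k, the determinant of the matrix indexed by compositions α, β of n into k non-negative parts, with entry ∏_{i=1}^k binom(x_i+λα_i, β_i), equals λ^{(k-1)·binom(n+k-1,k)} · ∏_{i=1}^n ((|x|+(λ-1)n+i)/i)^{binom(n+k-i-1,k-1)}, with |x| = x_1+···+x_k. -/

import Mathlib

open Finset

/-- The polynomial binomial coefficient `y(y-1)⋯(y-m+1)/m!`. -/
noncomputable def bch {F : Type*} [Field F] (y : F) (m : ℕ) : F :=
  (∏ j ∈ Finset.range m, (y - (j : F))) / (m.factorial : F)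

/-- Compositions of `n` into `k` non-negative parts. -/
abbrev Comp (n k : ℕ) := {f : Fin k → Fin (n + 1) // ∑ i, (f i : ℕ) = n}

/-- Compositions of `n` into `k` strictly positive parts. -/
abbrev CompPos (n k : ℕ) :=
  {f : Fin k → Fin (n + 1) // (∑ i, (f i : ℕ)) = n ∧ ∀ i, 0 < (f i : ℕ)}

/-!
Up to the factor `∏ i, (β i)!` of each column, the entries are the falling monomials
`P_β(y) = ∏ i, y_i (y_i - 1) ⋯ (y_i - β_i + 1)` at `y = x + λ α`. The last part of a composition is
determined by the others, so with `s = |x| + λ n` and `γ` the vector of the other parts the column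
of `β` is `y ↦ P_γ(y) (s - |y|)_m`, where `m = n - |γ|` and `(u)_m = u (u - 1) ⋯ (u - m + 1)`. Two
changes of columns, both triangular for the componentwise order on the vectors `γ` with `|γ| ≤ n`,
simplify the matrix:
* `P_γ(y) (s - |y|)_m ≡ (s - |γ|)_m P_γ(y)` modulo the `P_δ` with `δ > γ`, `|δ| ≤ n`;
* `P_γ(x + λ a) ≡ λ ^ |γ| P_γ(a)` modulo the `P_δ` with `δ < γ`.

What remains is the matrix of the integers `P_γ(α)`, which is triangular with diagonal entries
`∏ i, (γ i)!`. Each factor collected on the way is a product over the `j` up to some part of `β`, so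
its exponent in the end result is the number of compositions in which that part is at least `j`.
-/

section Triangular

variable {R I P : Type*} [CommRing R] [Fintype I] [DecidableEq I] [Preorder P]

theorem det_eq_prod_diag_of_rank (r : I → P) (M : Matrix I I R)
    (hM : ∀ i j, i ≠ j → ¬ r i < r j → M i j = 0) : M.det = ∏ i, M i i := by
  rw [Matrix.det_apply', sum_eq_single 1 _ (by simp)]
  · simp
  intro σ _ hσ
  -- A moved index `i` of minimal rank has `σ i` moved as well, so `r (σ i) < r i` is impossible.
  obtain ⟨i, hi, hmin⟩ := σ.support.exists_minimalFor r
    (nonempty_iff_ne_empty.2 (mt Equiv.Perm.support_eq_empty_iff.1 hσ))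
  have hzero : M (σ i) i = 0 := hM (σ i) i (Equiv.Perm.mem_support.1 hi)
    fun hlt => hlt.not_ge (hmin (Equiv.Perm.apply_mem_support.2 hi) hlt.le)
  have hprod : ∏ j, M (σ j) j = 0 := prod_eq_zero (mem_univ i) hzero
  rw [hprod, mul_zero]

theorem det_dual_eq_prod_mul_det_dual {V : Type*} [AddCommGroup V] [Module R V] (r : I → P)
    (φ : I → Module.Dual R V) (p q : I → V) (c : I → R)
    (hpq : ∀ j, p j - c j • q j ∈ Submodule.span R (q '' {i | r i < r j})) :
    (Matrix.of fun i j => φ i (p j)).det = (∏ j, c j) * (Matrix.of fun i j => φ i (q j)).det := by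
  have hcoeff : ∀ j, ∃ a : I → R, (∀ i, ¬ r i < r j → a i = 0) ∧
      p j = ∑ i, a i • q i + c j • q j := by
    intro j
    obtain ⟨a, ha, hsum⟩ := (Finsupp.mem_span_image_iff_linearCombination R).1 (hpq j)
    refine ⟨a, fun i hi => ?_, ?_⟩
    · by_contra hne
      exact hi (ha (Finsupp.mem_support_iff.2 hne))
    · rw [← sub_eq_iff_eq_add, ← hsum, Finsupp.linearCombination_apply,
        Finsupp.sum_fintype _ _ (by simp)]
  choose a ha hp using hcoeff
  let C : Matrix I I R := Matrix.of fun i j => a j i + if i = j then c j else 0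
  have hC : C.det = ∏ j, c j := by
    rw [det_eq_prod_diag_of_rank r]
    · simp [C, ha]
    · intro i j hij hr
      simp [C, hij, ha j i hr]
  have hfactor : (Matrix.of fun i j => φ i (p j)) = (Matrix.of fun i j => φ i (q j)) * C := by
    ext i j
    simp only [C, hp, Matrix.of_apply, Matrix.mul_apply, map_add, map_sum, map_smul, smul_eq_mul,
      add_mul, ite_mul, zero_mul, sum_add_distrib, sum_ite_eq', mem_univ, if_true,
      mul_comm (φ i (q _))]
  rw [hfactor, Matrix.det_mul, hC, mul_comm]

end Triangular

section PiNat

variable {ι : Type*} [DecidableEq ι]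

theorem pi_single_le_iff {γ : ι → ℕ} {i : ι} {m : ℕ} : Pi.single i m ≤ γ ↔ m ≤ γ i :=
  update_le_iff.trans (and_iff_left fun _ _ => Nat.zero_le _)

theorem lt_add_pi_single (γ : ι → ℕ) (i : ι) : γ < γ + Pi.single i 1 :=
  lt_add_of_pos_right _ (Pi.single_pos.2 one_pos)

theorem sum_add_pi_single [Fintype ι] (γ : ι → ℕ) (i : ι) :
    ∑ j, (γ + Pi.single i 1 : ι → ℕ) j = ∑ j, γ j + 1 := by
  simp [sum_add_distrib]

theorem pi_nat_induction [Finite ι] {p : (ι → ℕ) → Prop} (zero : p 0)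
    (add_single : ∀ γ i, p γ → p (γ + Pi.single i 1)) (γ : ι → ℕ) : p γ := by
  induction γ using WellFoundedLT.induction with
  | ind γ ih =>
    by_cases hγ : γ = 0
    · exact hγ ▸ zero
    obtain ⟨i, hi⟩ := Function.ne_iff.1 hγ
    have hle : Pi.single i 1 ≤ γ := pi_single_le_iff.2 (Nat.one_le_iff_ne_zero.2 hi)
    rw [← tsub_add_cancel_of_le hle]
    refine add_single _ i (ih _ (Pi.lt_def.2 ⟨tsub_le_self, i, ?_⟩))
    simpa [Nat.pos_iff_ne_zero] using hi

end PiNat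

section FallingMonomial

variable {R ι : Type*} [CommRing R] [Fintype ι]

/-- The falling-factorial analogue `∏ i, y_i (y_i - 1) ⋯ (y_i - γ_i + 1)` of the monomial `y ^ γ`,
as a function of the vector `y`. -/
noncomputable def fallingMonomial (γ : ι → ℕ) : (ι → R) → R :=
  fun y => ∏ i, (descPochhammer R (γ i)).eval (y i)

theorem fallingMonomial_zero : fallingMonomial (0 : ι → ℕ) = (1 : (ι → R) → R) := by
  ext y
  simp [fallingMonomial]

theorem fallingMonomial_natCast (γ α : ι → ℕ) :
    fallingMonomial γ (fun i => (α i : R)) = ∏ i, ((α i).descFactorial (γ i) : R) := by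
  simp [fallingMonomial, descPochhammer_eval_eq_descFactorial]

theorem fallingMonomial_add_single [DecidableEq ι] (γ : ι → ℕ) (i : ι) (y : ι → R) :
    fallingMonomial (γ + Pi.single i 1) y = (y i - γ i) * fallingMonomial γ y := by
  simp only [fallingMonomial, ← mul_prod_erase _ _ (mem_univ i)]
  have hrest : ∏ j ∈ univ.erase i,
      (descPochhammer R ((γ + Pi.single i 1 : ι → ℕ) j)).eval (y j) =
        ∏ j ∈ univ.erase i, (descPochhammer R (γ j)).eval (y j) :=
    prod_congr rfl fun j hj => by simp [ne_of_mem_erase hj]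
  rw [hrest, Pi.add_apply, Pi.single_eq_same, descPochhammer_succ_eval]
  ring

theorem eval_mul_mem_span_fallingMonomial [DecidableEq ι] {S T : Set (ι → ℕ)} (i : ι) (hST : S ⊆ T)
    (hadd : ∀ γ ∈ S, γ + Pi.single i 1 ∈ T) {f : (ι → R) → R}
    (hf : f ∈ Submodule.span R (fallingMonomial '' S)) :
    (fun y => y i * f y) ∈ Submodule.span R (fallingMonomial '' T) := by
  suffices h : Submodule.span R (fallingMonomial '' S) ≤
      (Submodule.span R (fallingMonomial '' T)).comap
        (LinearMap.mulLeft R fun y : ι → R => y i) from h hf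
  rw [Submodule.span_le]
  rintro _ ⟨γ, hγ, rfl⟩
  have heval : (fun y : ι → R => y i * fallingMonomial γ y) =
      fallingMonomial (γ + Pi.single i 1) + (γ i : R) • fallingMonomial γ := by
    ext y
    simp only [Pi.add_apply, Pi.smul_apply, fallingMonomial_add_single, smul_eq_mul]
    ring
  change (fun y : ι → R => y i * fallingMonomial γ y) ∈ Submodule.span R (fallingMonomial '' T)
  rw [heval]
  exact add_mem (Submodule.subset_span ⟨_, hadd γ hγ, rfl⟩)
    (Submodule.smul_mem _ _ (Submodule.subset_span ⟨_, hST hγ, rfl⟩))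

theorem fallingMonomial_affine_sub_mem_span (x : ι → R) (l : R) (γ : ι → ℕ) :
    (fun a => fallingMonomial γ fun i => x i + l * a i) - l ^ (∑ i, γ i) • fallingMonomial γ ∈
      Submodule.span R (fallingMonomial '' Set.Iio γ) := by
  classical
  induction γ using pi_nat_induction with
  | zero => simp [fallingMonomial_zero, ← Pi.one_def]
  | add_single γ i ih =>
    set f := (fun a => fallingMonomial γ fun i => x i + l * a i) -
      l ^ (∑ i, γ i) • fallingMonomial γ with hf
    have hlt := lt_add_pi_single γ i
    set U : Submodule R ((ι → R) → R) :=
      Submodule.span R (fallingMonomial '' Set.Iio (γ + Pi.single i 1))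
    have hf_mem : f ∈ U :=
      Submodule.span_mono (Set.image_mono (Set.Iio_subset_Iio hlt.le)) ih
    have hmul_mem : (fun y => y i * f y) ∈ U :=
      eval_mul_mem_span_fallingMonomial i (Set.Iio_subset_Iio hlt.le)
        (fun δ hδ => add_lt_add_left (Set.mem_Iio.1 hδ) (Pi.single i 1)) ih
    have hγ_mem : fallingMonomial γ ∈ U := Submodule.subset_span ⟨γ, hlt, rfl⟩
    have hrec : (fun a => fallingMonomial (γ + Pi.single i 1) fun i => x i + l * a i) -
        l ^ (∑ j, (γ + Pi.single i 1 : ι → ℕ) j) • fallingMonomial (γ + Pi.single i 1) =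
          (x i - γ i) • f + (l • fun y => y i * f y) +
            (l ^ (∑ i, γ i) * (x i - γ i + l * γ i)) • fallingMonomial γ := by
      rw [sum_add_pi_single]
      ext a
      simp only [hf, fallingMonomial_add_single, Pi.sub_apply, Pi.add_apply,
        Pi.smul_apply, smul_eq_mul]
      ring
    rw [hrec]
    exact add_mem (add_mem (Submodule.smul_mem _ _ hf_mem) (Submodule.smul_mem _ _ hmul_mem))
      (Submodule.smul_mem _ _ hγ_mem)

theorem fallingMonomial_mul_descPochhammer_sub_mem_span (s : R) (γ : ι → ℕ) (m : ℕ) :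
    (fun y => fallingMonomial γ y * (descPochhammer R m).eval (s - ∑ i, y i)) -
        (descPochhammer R m).eval (s - ∑ i, (γ i : R)) • fallingMonomial γ ∈
      Submodule.span R (fallingMonomial '' {δ | γ < δ ∧ ∑ i, δ i ≤ ∑ i, γ i + m}) := by
  classical
  induction m with
  | zero => simp
  | succ m ih =>
    set c := (descPochhammer R m).eval (s - ∑ i, (γ i : R)) with hc
    set f := (fun y => fallingMonomial γ y * (descPochhammer R m).eval (s - ∑ i, y i)) -
      c • fallingMonomial γ with hf
    set T := {δ : ι → ℕ | γ < δ ∧ ∑ i, δ i ≤ ∑ i, γ i + (m + 1)}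
    set U : Submodule R ((ι → R) → R) := Submodule.span R (fallingMonomial '' T)
    have hsub : {δ : ι → ℕ | γ < δ ∧ ∑ i, δ i ≤ ∑ i, γ i + m} ⊆ T :=
      fun δ hδ => ⟨hδ.1, by have := hδ.2; lia⟩
    have hf_mem : f ∈ U := Submodule.span_mono (Set.image_mono hsub) ih
    have hmul_mem (i : ι) : (fun y => y i * f y) ∈ U :=
      eval_mul_mem_span_fallingMonomial i hsub (fun δ hδ =>
        ⟨hδ.1.trans (lt_add_pi_single δ i), by rw [sum_add_pi_single]; have := hδ.2; lia⟩) ih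
    have hsingle_mem (i : ι) : fallingMonomial (γ + Pi.single i 1) ∈ U :=
      Submodule.subset_span ⟨_, ⟨lt_add_pi_single γ i, by rw [sum_add_pi_single]; lia⟩, rfl⟩
    have hrec : (fun y => fallingMonomial γ y * (descPochhammer R (m + 1)).eval (s - ∑ i, y i)) -
        (descPochhammer R (m + 1)).eval (s - ∑ i, (γ i : R)) • fallingMonomial γ =
          (s - m) • f - (∑ i, fun y => y i * f y) -
            c • ∑ i, fallingMonomial (γ + Pi.single i 1) := by
      ext y
      simp only [hf, hc, descPochhammer_succ_eval, fallingMonomial_add_single, Pi.sub_apply,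
        Pi.smul_apply, Finset.sum_apply, smul_eq_mul, ← sum_mul, sum_sub_distrib]
      ring
    rw [hrec]
    exact sub_mem (sub_mem (Submodule.smul_mem _ _ hf_mem) (sum_mem fun i _ => hmul_mem i))
      (Submodule.smul_mem _ _ (sum_mem fun i _ => hsingle_mem i))

end FallingMonomial

section Composition

/-- The sequence of parts of a composition, as natural numbers. -/
def Comp.parts {n k : ℕ} (β : Comp n k) : Fin k → ℕ := fun i => β.1 i

theorem Comp.sum_parts {n k : ℕ} (β : Comp n k) : ∑ i, β.parts i = n := β.2

theorem Comp.parts_injective {n k : ℕ} : Function.Injective (Comp.parts : Comp n k → Fin k → ℕ) :=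
  fun _ _ h => Subtype.ext (funext fun i => Fin.ext (congrFun h i))

theorem Comp.exists_parts_eq {n k : ℕ} {γ : Fin k → ℕ} (hγ : ∑ i, γ i = n) :
    ∃ β : Comp n k, β.parts = γ :=
  ⟨⟨fun i => ⟨γ i, Nat.lt_succ_of_le
    (hγ ▸ single_le_sum (fun _ _ => Nat.zero_le _) (mem_univ i))⟩, hγ⟩, rfl⟩

/-- The parts of a composition other than the last one; they determine the composition. -/
def Comp.init {n d : ℕ} (β : Comp n (d + 1)) : Fin d → ℕ := Fin.init β.parts

theorem Comp.sum_init_add_last {n d : ℕ} (β : Comp n (d + 1)) :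
    ∑ i, β.init i + β.parts (Fin.last d) = n :=
  (Fin.sum_univ_castSucc β.parts).symm.trans β.sum_parts

theorem Comp.init_injective {n d : ℕ} :
    Function.Injective (Comp.init : Comp n (d + 1) → Fin d → ℕ) := by
  intro α β h
  have hα := α.sum_init_add_last
  have hβ := β.sum_init_add_last
  rw [h] at hα
  refine Comp.parts_injective (funext (Fin.lastCases ?_ fun i => congrFun h i))
  lia

theorem Comp.range_init {n d : ℕ} :
    Set.range (Comp.init : Comp n (d + 1) → Fin d → ℕ) = {γ | ∑ i, γ i ≤ n} := by
  ext γ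
  constructor
  · rintro ⟨β, rfl⟩
    exact (Nat.le_add_right _ _).trans_eq β.sum_init_add_last
  · intro hγ
    obtain ⟨β, hβ⟩ := Comp.exists_parts_eq (n := n)
      (γ := (Fin.snoc γ (n - ∑ i, γ i) : Fin (d + 1) → ℕ))
      (by simpa [Fin.sum_univ_castSucc] using Nat.add_sub_cancel' hγ)
    exact ⟨β, by rw [Comp.init, hβ, Fin.init_snoc]⟩

theorem prod_comp_eq_prod_piAntidiag {M : Type*} [CommMonoid M] {n k : ℕ} (f : (Fin k → ℕ) → M) :
    ∏ β : Comp n k, f β.parts = ∏ γ ∈ piAntidiag univ n, f γ := by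
  refine prod_nbij Comp.parts (fun β _ => by simpa using β.sum_parts)
    Comp.parts_injective.injOn (fun γ hγ => ?_) fun _ _ => rfl
  obtain ⟨β, hβ⟩ := Comp.exists_parts_eq (n := n) (γ := γ) (by simpa using hγ)
  exact ⟨β, by simp, hβ⟩

theorem card_piAntidiag_nat {ι : Type*} [DecidableEq ι] (s : Finset ι) (n : ℕ) :
    (piAntidiag s n).card = (s.card + n - 1).choose n := by
  rw [← card_finsuppAntidiag_nat_eq_choose, finsuppAntidiag, card_map, card_attach]

theorem filter_le_piAntidiag {ι : Type*} [DecidableEq ι] {s : Finset ι} {i : ι} (hi : i ∈ s)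
    {n j : ℕ} (hj : j ≤ n) : (piAntidiag s n).filter (j ≤ · i) =
      (piAntidiag s (n - j)).map (addRightEmbedding (Pi.single i j)) := by
  have hsum (γ : ι → ℕ) : ∑ q ∈ s, (γ + Pi.single i j : ι → ℕ) q = ∑ q ∈ s, γ q + j := by
    simp [sum_add_distrib, sum_pi_single', hi]
  have hsupp (γ : ι → ℕ) : (∀ q, (γ + Pi.single i j : ι → ℕ) q ≠ 0 → q ∈ s) ↔
      ∀ q, γ q ≠ 0 → q ∈ s := by
    refine forall_congr' fun q => ?_
    rcases eq_or_ne q i with rfl | hq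
    · simp [hi]
    · simp [hq]
  have hmem (γ : ι → ℕ) : γ + Pi.single i j ∈ piAntidiag s n ↔ γ ∈ piAntidiag s (n - j) := by
    rw [mem_piAntidiag, mem_piAntidiag, hsum, hsupp, eq_tsub_iff_add_eq_of_le hj]
  ext γ
  rw [mem_filter, mem_map]
  constructor
  · rintro ⟨hγ, hle⟩
    have hadd := tsub_add_cancel_of_le (pi_single_le_iff.2 hle)
    exact ⟨γ - Pi.single i j, (hmem _).1 (hadd.symm ▸ hγ), hadd⟩
  · rintro ⟨γ, hγ, rfl⟩
    exact ⟨(hmem γ).2 hγ, by simp⟩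

theorem prod_piAntidiag_prod_Icc {M ι : Type*} [CommMonoid M] [DecidableEq ι] {s : Finset ι}
    {i : ι} (hi : i ∈ s) (n : ℕ) (f : ℕ → M) :
    ∏ γ ∈ piAntidiag s n, ∏ j ∈ Icc 1 (γ i), f j =
      ∏ j ∈ Icc 1 n, f j ^ (piAntidiag s (n - j)).card := by
  rw [prod_comm' (t' := Icc 1 n) (s' := fun j => (piAntidiag s n).filter (j ≤ · i))]
  · refine prod_congr rfl fun j hj => ?_
    rw [prod_const, filter_le_piAntidiag hi (mem_Icc.1 hj).2, card_map]
  · intro γ j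
    simp only [mem_piAntidiag, mem_Icc, mem_filter]
    have hle : s.sum γ = n → γ i ≤ n :=
      fun h => h ▸ single_le_sum (fun _ _ => Nat.zero_le _) hi
    grind

theorem prod_comp_prod_Icc {M : Type*} [CommMonoid M] (n d : ℕ) (i : Fin (d + 1)) (f : ℕ → M) :
    ∏ β : Comp n (d + 1), ∏ j ∈ Icc 1 (β.parts i), f j =
      ∏ j ∈ Icc 1 n, f j ^ (n - j + d).choose d := by
  rw [prod_comp_eq_prod_piAntidiag fun γ => ∏ j ∈ Icc 1 (γ i), f j,
    prod_piAntidiag_prod_Icc (mem_univ i)]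
  refine prod_congr rfl fun j _ => ?_
  rw [card_piAntidiag_nat, card_univ, Fintype.card_fin, add_right_comm, Nat.add_sub_cancel,
    add_comm d, Nat.choose_symm_add]

theorem prod_comp_prod_prod_Icc {M ι : Type*} [CommMonoid M] [Fintype ι] (n d : ℕ)
    (e : ι → Fin (d + 1)) (f : ℕ → M) :
    ∏ β : Comp n (d + 1), ∏ i, ∏ j ∈ Icc 1 (β.parts (e i)), f j =
      ∏ j ∈ Icc 1 n, (f j ^ Fintype.card ι) ^ (n - j + d).choose d := by
  rw [prod_comm]
  simp only [prod_comp_prod_Icc, prod_const, card_univ, ← prod_pow, pow_right_comm]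

theorem pow_mul_factorial_eq_prod_Icc {R : Type*} [CommSemiring R] (l : R) (m : ℕ) :
    l ^ m * (m.factorial : R) = ∏ j ∈ Icc 1 m, l * (j : R) := by
  rw [prod_mul_distrib, prod_const, Nat.card_Icc, Nat.add_sub_cancel,
    ← prod_Ico_id_eq_factorial, Ico_add_one_right_eq_Icc, Nat.cast_prod]

theorem prod_comp_prod_factorial {R : Type*} [CommSemiring R] (n d : ℕ) :
    ∏ β : Comp n (d + 1), ∏ i, ((β.parts i).factorial : R) =
      ∏ j ∈ Icc 1 n, ((j : R) ^ (d + 1)) ^ (n - j + d).choose d := by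
  simp only [← prod_Ico_id_eq_factorial, Ico_add_one_right_eq_Icc, Nat.cast_prod]
  exact (prod_comp_prod_prod_Icc n d id fun j => (j : R)).trans (by rw [Fintype.card_fin])

theorem sum_Icc_sub_add_choose (n d : ℕ) :
    ∑ j ∈ Icc 1 n, (n - j + d).choose d = (n + d).choose (d + 1) := by
  cases n with
  | zero => simp
  | succ n =>
    rw [add_right_comm, ← Nat.sum_range_add_choose, ← Ico_add_one_right_eq_Icc,
      sum_Ico_eq_sum_range, ← sum_range_reflect]
    refine sum_congr rfl fun i hi => ?_
    have hle := mem_range.1 hi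
    congr 2
    lia

end Composition

section Determinant

variable {R : Type*} [CommRing R]

theorem descPochhammer_eval_add_natCast (u : R) (m : ℕ) :
    (descPochhammer R m).eval (u + m) = ∏ j ∈ Icc 1 m, (u + j) := by
  rw [descPochhammer_eval_eq_prod_range, ← prod_range_reflect,
    ← Ico_add_one_right_eq_Icc, prod_Ico_eq_prod_range, Nat.add_sub_cancel]
  refine prod_congr rfl fun j hj => ?_
  have hle : j + 1 ≤ m := mem_range.1 hj
  rw [Nat.sub_sub, add_comm 1, Nat.cast_sub hle]
  ring

theorem det_fallingMonomial_natCast {I ι : Type*} [Fintype I] [DecidableEq I] [Fintype ι]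
    {e : I → ι → ℕ} (he : Function.Injective e) :
    (Matrix.of fun a b => fallingMonomial (e b) fun i => (e a i : R)).det =
      ∏ b, ∏ i, ((e b i).factorial : R) := by
  rw [det_eq_prod_diag_of_rank (OrderDual.toDual ∘ e)]
  · simp [fallingMonomial_natCast, Nat.descFactorial_self]
  · intro a b hab hlt
    have hle : ¬ e b ≤ e a := fun h => hlt (h.lt_of_ne (he.ne hab.symm))
    obtain ⟨i, hi⟩ := not_forall.1 hle
    rw [Matrix.of_apply, fallingMonomial_natCast]
    exact prod_eq_zero (mem_univ i)
      (by rw [Nat.descFactorial_of_lt (not_le.1 hi), Nat.cast_zero])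

theorem det_fallingMonomial_affine {I ι : Type*} [Fintype I] [DecidableEq I] [Fintype ι]
    {e : I → ι → ℕ} (he : Function.Injective e) (hlower : IsLowerSet (Set.range e))
    (x : ι → R) (l : R) :
    (Matrix.of fun a b => fallingMonomial (e b) fun i => x i + l * e a i).det =
      ∏ b, ∏ i, (l ^ e b i * ((e b i).factorial : R)) := by
  have htri := det_dual_eq_prod_mul_det_dual e
    (fun a => (LinearMap.proj fun i => (e a i : R) : Module.Dual R ((ι → R) → R)))
    (fun b y => fallingMonomial (e b) fun i => x i + l * y i) (fun b => fallingMonomial (e b))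
    (fun b => l ^ ∑ i, e b i) fun b => by
      refine Submodule.span_mono ?_ (fallingMonomial_affine_sub_mem_span x l (e b))
      rintro _ ⟨δ, hδ, rfl⟩
      obtain ⟨c, rfl⟩ := hlower (le_of_lt hδ) ⟨b, rfl⟩
      exact ⟨c, hδ, rfl⟩
  simp only [LinearMap.proj_apply] at htri
  rw [htri, det_fallingMonomial_natCast he, ← prod_mul_distrib]
  simp only [prod_mul_distrib, prod_pow_eq_pow_sum]

variable {n d : ℕ}

theorem det_fallingMonomial_parts_eq_prod_mul_det_init (x : Fin (d + 1) → R) (l : R) :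
    (Matrix.of fun α β : Comp n (d + 1) =>
        fallingMonomial β.parts fun i => x i + l * α.parts i).det =
      (∏ β : Comp n (d + 1), ∏ j ∈ Icc 1 (β.parts (Fin.last d)),
          (∑ i, x i + (l - 1) * n + j)) *
        (Matrix.of fun α β : Comp n (d + 1) =>
          fallingMonomial β.init fun i => x i.castSucc + l * α.init i).det := by
  set s := ∑ i, x i + l * n with hs
  have htri := det_dual_eq_prod_mul_det_dual
    (fun β : Comp n (d + 1) => OrderDual.toDual β.init)
    (fun α => (LinearMap.proj fun i => x i.castSucc + l * α.init i :
      Module.Dual R ((Fin d → R) → R)))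
    (fun β y => fallingMonomial β.init y *
      (descPochhammer R (β.parts (Fin.last d))).eval (s - ∑ i, y i))
    (fun β => fallingMonomial β.init)
    (fun β => (descPochhammer R (β.parts (Fin.last d))).eval (s - ∑ i, (β.init i : R)))
    fun β => by
      refine Submodule.span_mono ?_ (fallingMonomial_mul_descPochhammer_sub_mem_span s β.init _)
      rintro _ ⟨δ, ⟨hlt, hle⟩, rfl⟩
      obtain ⟨γ, rfl⟩ := Comp.range_init.ge (hle.trans_eq β.sum_init_add_last)
      exact ⟨γ, hlt, rfl⟩
  have hlast (α : Comp n (d + 1)) : (∑ i, (α.init i : R)) + α.parts (Fin.last d) = n :=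
    mod_cast congrArg (Nat.cast : ℕ → R) α.sum_init_add_last
  have hentry (α β : Comp n (d + 1)) : fallingMonomial β.parts (fun i => x i + l * α.parts i) =
      fallingMonomial β.init (fun i => x i.castSucc + l * α.init i) *
        (descPochhammer R (β.parts (Fin.last d))).eval
          (s - ∑ i, (x i.castSucc + l * α.init i)) := by
    rw [fallingMonomial, Fin.prod_univ_castSucc]
    congr 2
    rw [hs, Fin.sum_univ_castSucc, sum_add_distrib, ← mul_sum]
    linear_combination l * hlast α
  have hdiag (β : Comp n (d + 1)) :
      (descPochhammer R (β.parts (Fin.last d))).eval (s - ∑ i, (β.init i : R)) =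
        ∏ j ∈ Icc 1 (β.parts (Fin.last d)), (∑ i, x i + (l - 1) * n + j) := by
    rw [← descPochhammer_eval_add_natCast]
    congr 1
    linear_combination -hlast β
  simpa only [LinearMap.proj_apply, hentry, hdiag] using htri

theorem det_fallingMonomial_parts (x : Fin (d + 1) → R) (l : R) :
    (Matrix.of fun α β : Comp n (d + 1) =>
        fallingMonomial β.parts fun i => x i + l * α.parts i).det =
      ∏ j ∈ Icc 1 n,
        ((l * j) ^ d * (∑ i, x i + (l - 1) * n + j)) ^ (n - j + d).choose d := by
  have hlower : IsLowerSet (Set.range (Comp.init : Comp n (d + 1) → Fin d → ℕ)) := by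
    rw [Comp.range_init]
    exact fun γ δ hδγ hγ => (sum_le_sum fun i _ => hδγ i).trans hγ
  have hinit : ∏ β : Comp n (d + 1), ∏ i, (l ^ β.init i * ((β.init i).factorial : R)) =
      ∏ j ∈ Icc 1 n, ((l * j) ^ d) ^ (n - j + d).choose d := by
    simp only [pow_mul_factorial_eq_prod_Icc]
    exact (prod_comp_prod_prod_Icc n d Fin.castSucc fun j => l * (j : R)).trans
      (by rw [Fintype.card_fin])
  rw [det_fallingMonomial_parts_eq_prod_mul_det_init, prod_comp_prod_Icc n d (Fin.last d),
    det_fallingMonomial_affine Comp.init_injective hlower, hinit, ← prod_mul_distrib]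
  exact prod_congr rfl fun j _ => by rw [mul_pow ((l * j) ^ d), mul_comm]

end Determinant

section Field

variable {F : Type*} [Field F]

theorem prod_bch {ι : Type*} [Fintype ι] (γ : ι → ℕ) (y : ι → F) :
    ∏ i, bch (y i) (γ i) = (∏ i, ((γ i).factorial : F))⁻¹ * fallingMonomial γ y := by
  simp only [bch, fallingMonomial, descPochhammer_eval_eq_prod_range]
  rw [prod_div_distrib, div_eq_inv_mul]

theorem det_bch_parts {n d : ℕ} (hn : (n.factorial : F) ≠ 0) (x : Fin (d + 1) → F) (l : F) :
    (Matrix.of fun α β : Comp n (d + 1) => ∏ i, bch (x i + l * α.parts i) (β.parts i)).det =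
      ∏ j ∈ Icc 1 n,
        (l ^ d * ((∑ i, x i + (l - 1) * n + j) / j)) ^ (n - j + d).choose d := by
  simp only [prod_bch]
  refine (Matrix.det_mul_row (fun β : Comp n (d + 1) => (∏ i, ((β.parts i).factorial : F))⁻¹)
    (Matrix.of fun α β => fallingMonomial β.parts fun i => x i + l * α.parts i)).trans ?_
  rw [det_fallingMonomial_parts, prod_inv_distrib, prod_comp_prod_factorial,
    ← prod_inv_distrib, ← prod_mul_distrib]
  refine prod_congr rfl fun j hj => ?_
  have hj0 : (j : F) ≠ 0 := by
    obtain ⟨hj1, hjn⟩ := mem_Icc.1 hj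
    exact ne_zero_of_dvd_ne_zero hn (Nat.cast_dvd_cast (Nat.dvd_factorial hj1 hjn))
  rw [← inv_pow, ← mul_pow]
  congr 1
  field_simp
  ring

end Field

theorem stmt8_general {F : Type*} [Field F] (n k : ℕ) (hk : 0 < k) (hn : (n.factorial : F) ≠ 0)
    (x : Fin k → F) (l : F) :
    Matrix.det (Matrix.of fun α β : Comp n k =>
        ∏ i, bch (x i + l * ((α.1 i : ℕ) : F)) ((β.1 i : ℕ))) =
      l ^ ((k - 1) * (n + k - 1).choose k) *
        ∏ i ∈ Finset.Icc 1 n,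
          (((∑ j, x j) + (l - 1) * (n : F) + (i : F)) / (i : F)) ^
            ((n + k - i - 1).choose (k - 1)) := by
  obtain ⟨d, rfl⟩ : ∃ d, k = d + 1 := ⟨k - 1, by lia⟩
  have hexp (j : ℕ) (hj : j ∈ Icc 1 n) : n + (d + 1) - j - 1 = n - j + d := by
    have := (mem_Icc.1 hj).2
    lia
  refine (det_bch_parts hn x l).trans ?_
  simp only [mul_pow (l ^ d), prod_mul_distrib, prod_pow_eq_pow_sum, ← pow_mul,
    ← mul_sum, sum_Icc_sub_add_choose]
  exact congrArg (l ^ (d * (n + d).choose (d + 1)) * ·)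
    (prod_congr rfl fun j hj => by rw [hexp j hj, Nat.add_sub_cancel])

theorem stmt8 {F : Type*} [Field F] [CharZero F] (n k : ℕ) (hn : 0 < n) (hk : 0 < k)
    (x : Fin k → F) (l : F) :
    Matrix.det (Matrix.of fun α β : Comp n k =>
        ∏ i, bch (x i + l * ((α.1 i : ℕ) : F)) ((β.1 i : ℕ))) =
      l ^ ((k - 1) * (n + k - 1).choose k) *
        ∏ i ∈ Finset.Icc 1 n,
          (((∑ j, x j) + (l - 1) * (n : F) + (i : F)) / (i : F)) ^
            ((n + k - i - 1).choose (k - 1)) :=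
  stmt8_general n k hk (mod_cast n.factorial_ne_zero) x l
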